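/- The equality =_RCCS is a conservative extension of =_CCS: for all CCS processes A and B (viewed as RCCS processes), A =_CCS B if and only if A =_RCCS B. -/

import Mathlib

/-!
Formalization of RCCS (Randomized CCS) following the paper
"A Uniform Framework for Probabilistic Process Models".
Channels form a type `Chan`; terms use de Bruijn indices for process variables.
-/

noncomputable section
open scoped Classical

/-- RCCS terms over a set of channels, with de Bruijn process variables.
`sum n α T` is the nondeterministic choice `Σ_{i∈[n]} α_i.T_i` (guards are
names `Sum.inl a` or conames `Sum.inr a`); `rand n p T` is the random choice
`⊕_{i∈[n]} p_i τ.T_i`; `par` is composition, `loc a T` is localization `(a)T`,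
and `fix T` is the fixpoint `μX.T`. -/
inductive Tm (Chan : Type) : Type
  | var : ℕ → Tm Chan
  | sum : (n : ℕ) → (Fin n → Chan ⊕ Chan) → (Fin n → Tm Chan) → Tm Chan
  | rand : (n : ℕ) → (Fin n → ℝ) → (Fin n → Tm Chan) → Tm Chan
  | par : Tm Chan → Tm Chan → Tm Chan
  | loc : Chan → Tm Chan → Tm Chan
  | fix : Tm Chan → Tm Chan

variable {Chan : Type}

/-- Labels: names, conames, and `tau p` for `p ∈ (0,1]`; `tau 1` is the plain
silent action `τ`, identified with `1τ`. -/
inductive Lab (Chan : Type) : Type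
  | name : Chan → Lab Chan
  | coname : Chan → Lab Chan
  | tau : ℝ → Lab Chan

/-- The label of an external prefix. -/
def guardLab : Chan ⊕ Chan → Lab Chan
  | .inl a => .name a
  | .inr a => .coname a

/-- A label is an action in `Act` if it is a name, a coname, or `τ = 1τ`. -/
def Lab.IsAct : Lab Chan → Prop
  | .name _ => True
  | .coname _ => True
  | .tau p => p = 1

/-- Shift de Bruijn indices `≥ c` up by one. -/
def Tm.lift : ℕ → Tm Chan → Tm Chan
  | c, .var n => .var (if n < c then n else n + 1)
  | c, .sum n α T => .sum n α fun i => Tm.lift c (T i)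
  | c, .rand n p T => .rand n p fun i => Tm.lift c (T i)
  | c, .par S T => .par (Tm.lift c S) (Tm.lift c T)
  | c, .loc a T => .loc a (Tm.lift c T)
  | c, .fix T => .fix (Tm.lift (c + 1) T)

/-- Capture-avoiding substitution of the term `S` for variable `c`
(other variables above `c` are shifted down). -/
def Tm.inst : ℕ → Tm Chan → Tm Chan → Tm Chan
  | c, S, .var n => if n < c then .var n else if n = c then S else .var (n - 1)
  | c, S, .sum n α T => .sum n α fun i => Tm.inst c S (T i)
  | c, S, .rand n p T => .rand n p fun i => Tm.inst c S (T i)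
  | c, S, .par S' T => .par (Tm.inst c S S') (Tm.inst c S T)
  | c, S, .loc a T => .loc a (Tm.inst c S T)
  | c, S, .fix T => .fix (Tm.inst (c + 1) (Tm.lift 0 S) T)

/-- All free variables are `< k`. -/
def Tm.ClosedAt : ℕ → Tm Chan → Prop
  | k, .var n => n < k
  | k, .sum _ _ T => ∀ i, Tm.ClosedAt k (T i)
  | k, .rand _ _ T => ∀ i, Tm.ClosedAt k (T i)
  | k, .par S T => Tm.ClosedAt k S ∧ Tm.ClosedAt k T
  | k, .loc _ T => Tm.ClosedAt k T
  | k, .fix T => Tm.ClosedAt (k + 1) T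

/-- Variable `v` is guarded: every free occurrence of `v` is under a prefix. -/
def Tm.Guarded : ℕ → Tm Chan → Prop
  | v, .var n => n ≠ v
  | _, .sum _ _ _ => True
  | _, .rand _ _ _ => True
  | v, .par S T => Tm.Guarded v S ∧ Tm.Guarded v T
  | v, .loc _ T => Tm.Guarded v T
  | v, .fix T => Tm.Guarded (v + 1) T

/-- Well-formedness: in every random choice `⊕_{i∈I} p_i τ.T_i` we have `|I| ≥ 2`,
`p_i ∈ (0,1)` and `Σ_i p_i = 1`; in every fixpoint `μX.T` the variable `X` is
guarded in `T`. -/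
def Tm.WF : Tm Chan → Prop
  | .var _ => True
  | .sum _ _ T => ∀ i, Tm.WF (T i)
  | .rand n p T => 2 ≤ n ∧ (∀ i, 0 < p i ∧ p i < 1) ∧ (∑ i, p i) = 1 ∧ ∀ i, Tm.WF (T i)
  | .par S T => Tm.WF S ∧ Tm.WF T
  | .loc _ T => Tm.WF T
  | .fix T => Tm.Guarded 0 T ∧ Tm.WF T

/-- A term with no random choice, i.e. a CCS term. -/
def Tm.NoRand : Tm Chan → Prop
  | .var _ => True
  | .sum _ _ T => ∀ i, Tm.NoRand (T i)
  | .rand _ _ _ => False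
  | .par S T => Tm.NoRand S ∧ Tm.NoRand T
  | .loc _ T => Tm.NoRand T
  | .fix T => Tm.NoRand T

/-- The transition relation of RCCS. -/
inductive Step : Tm Chan → Lab Chan → Tm Chan → Prop
  | sum {n α T} (i : Fin n) : Step (.sum n α T) (guardLab (α i)) (T i)
  | rand {n p T} (i : Fin n) : Step (.rand n p T) (.tau (p i)) (T i)
  | comL {S S' T T' a} : Step S (.name a) S' → Step T (.coname a) T' →
      Step (.par S T) (.tau 1) (.par S' T')
  | comR {S S' T T' a} : Step S (.coname a) S' → Step T (.name a) T' →
      Step (.par S T) (.tau 1) (.par S' T')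
  | parL {S S' T l} : Step S l S' → Step (.par S T) l (.par S' T)
  | parR {S T T' l} : Step T l T' → Step (.par S T) l (.par S T')
  | loc {T T' l} (a : Chan) : Step T l T' → l ≠ .name a → l ≠ .coname a →
      Step (.loc a T) l (.loc a T')
  | fix {T T' l} : Step (Tm.inst 0 (.fix T) T) l T' → Step (.fix T) l T'

/-- Collective silent transitions `B →^{∐_{i∈[n]} p_i τ} ∐_{i∈[n]} B_i`,
arising from a single random choice and closed under composition,
localization and recursion. -/
inductive CStep : Tm Chan → (n : ℕ) → (Fin n → ℝ) → (Fin n → Tm Chan) → Prop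
  | rand {n p T} : CStep (.rand n p T) n p T
  | parL {S T n p S'} : CStep S n p S' → CStep (.par S T) n p fun i => .par (S' i) T
  | parR {S T n p T'} : CStep T n p T' → CStep (.par S T) n p fun i => .par S (T' i)
  | loc {T n p T'} (a : Chan) : CStep T n p T' → CStep (.loc a T) n p fun i => .loc a (T' i)
  | fix {T n p T'} : CStep (Tm.inst 0 (.fix T) T) n p T' → CStep (.fix T) n p T'

/-- The set `P_RCCS` of RCCS processes: closed well-formed terms. -/
def Proc (Chan : Type) : Type := {T : Tm Chan // T.ClosedAt 0 ∧ T.WF}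

/-- A (potential) silent tree: nodes are addressed by reversed lists of child
indices (the root is `[]`, the `i`-th child of `σ` is `i :: σ`); each node
carries a process label and the probability labelling its incoming edge
(the root carries `1`). -/
structure PTree (Chan : Type) where
  node : List ℕ → Option (Proc Chan × ℝ)

namespace PTree

variable (t : PTree Chan)

/-- The address `σ` is a node of the tree. -/
def hasNode (σ : List ℕ) : Prop := (t.node σ).isSome

/-- The probability labelling the incoming edge of the node at `σ`. -/
def edgeProb (σ : List ℕ) : ℝ := ((t.node σ).map Prod.snd).getD 0

/-- The probability of the path from the root to `σ`: the product of the edge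
labels along it (`1` for the empty path). -/
def pathProb (t : PTree Chan) : List ℕ → ℝ
  | [] => 1
  | i :: σ => t.edgeProb (i :: σ) * pathProb t σ

/-- `σ` is a leaf. -/
def IsLeaf (σ : List ℕ) : Prop := t.hasNode σ ∧ ¬ t.hasNode (0 :: σ)

/-- `P(t↾_k)`: the sum of the probabilities of the branches of the truncation
of `t` at depth `k` (a branch of `t↾_k` ends either at depth `k` or at a leaf
of `t` of depth `< k`). -/
def truncProb (k : ℕ) : ℝ :=
  ∑' σ : List ℕ,
    if t.hasNode σ ∧ (σ.length = k ∨ (σ.length < k ∧ ¬ t.hasNode (0 :: σ)))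
    then t.pathProb σ else 0

/-- `P^k(t)`: the sum of the probabilities of the finite branches of `t` of
length at most `k`. -/
def finBranchProb (k : ℕ) : ℝ :=
  ∑' σ : List ℕ, if t.IsLeaf σ ∧ σ.length ≤ k then t.pathProb σ else 0

/-- `t` is regular: `P^f(t) = lim_k P^k(t) = 1`. -/
def Regular : Prop := Filter.Tendsto t.finBranchProb Filter.atTop (nhds 1)

/-- `t` is divergent: `P^f(t) = lim_k P^k(t) = 0`. -/
def Divergent : Prop := Filter.Tendsto t.finBranchProb Filter.atTop (nhds 0)

end PTree

/-- `t` is a silent tree of `A`: the root is labeled `A`, the node set is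
prefix-closed with children indexed by an initial segment of `ℕ`, the tree is
finitely branching, and every edge labeled `p` from `B` to `B'` satisfies
`p ∈ (0,1]` and `B →^{pτ} B'`. -/
def IsSilentTree (A : Proc Chan) (t : PTree Chan) : Prop :=
  t.node [] = some (A, 1) ∧
  (∀ i σ, t.hasNode (i :: σ) → t.hasNode σ) ∧
  (∀ i j σ, j ≤ i → t.hasNode (i :: σ) → t.hasNode (j :: σ)) ∧
  (∀ σ, ∃ n, ∀ i, n ≤ i → ¬ t.hasNode (i :: σ)) ∧
  (∀ σ i B p B' p', t.node σ = some (B, p) → t.node (i :: σ) = some (B', p') →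
    0 < p' ∧ p' ≤ 1 ∧ Step B.val (.tau p') B'.val)

/-- An ε-tree of `A` with regard to `E`: an `E`-tree of `A` (all node labels lie
in `[A]_E`) such that (1) any edge labeled `q < 1` out of a node `B` comes from a
collective random transition whose targets are exactly the children of `B`, and
(2) an edge labeled `1` out of `B` is a transition `B →^τ B'` to the unique
child `B'` of `B`. -/
def IsETree (E : Proc Chan → Proc Chan → Prop) (A : Proc Chan) (t : PTree Chan) : Prop :=
  IsSilentTree A t ∧
  (∀ σ B p, t.node σ = some (B, p) → E A B) ∧
  (∀ σ i B p B' q, t.node σ = some (B, p) → t.node (i :: σ) = some (B', q) → q < 1 →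
    ∃ n ps Ts, CStep B.val n ps Ts ∧
      (∀ j : ℕ, t.hasNode (j :: σ) ↔ j < n) ∧
      (∀ j : Fin n, ∃ C : Proc Chan, C.val = Ts j ∧ t.node ((j : ℕ) :: σ) = some (C, ps j))) ∧
  (∀ σ i B p B', t.node σ = some (B, p) → t.node (i :: σ) = some (B', 1) →
    Step B.val (.tau 1) B'.val ∧ i = 0 ∧ ¬ t.hasNode (1 :: σ))

/-- The `E`-class of `A`. -/
def classOf (E : Proc Chan → Proc Chan → Prop) (A : Proc Chan) : Set (Proc Chan) := {B | E A B}

/-- `C` is an equivalence class of `E`. -/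
def IsClass (E : Proc Chan → Proc Chan → Prop) (C : Set (Proc Chan)) : Prop :=
  ∃ A, C = classOf E A

/-- An equivalence `E` on `P_RCCS` is codivergent if for every `E`-class either
all members have a divergent ε-tree with regard to `E` or none does. -/
def Codivergent (E : Proc Chan → Proc Chan → Prop) : Prop :=
  ∀ A B, E A B →
    ((∃ t, IsETree E A t ∧ t.Divergent) ↔ (∃ t, IsETree E B t ∧ t.Divergent))

/-- An ℓ-transition `A ⇝_E →^ℓ C`: a regular ε-tree of `A` with regard to `E`
such that every leaf `L` has a transition `L →^ℓ L'` with `L' ∈ C`. -/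
def LTrans (E : Proc Chan → Proc Chan → Prop) (A : Proc Chan) (l : Lab Chan)
    (C : Set (Proc Chan)) : Prop :=
  ∃ t, IsETree E A t ∧ t.Regular ∧
    ∀ σ L p, t.node σ = some (L, p) → ¬ t.hasNode (0 :: σ) →
      ∃ L' ∈ C, Step L.val l L'.val

/-- The raw term `T` belongs to the set `C` of processes. -/
def inC (C : Set (Proc Chan)) (T : Tm Chan) : Prop := ∃ P ∈ C, P.val = T

/-- `P(L → C)` of a collective silent transition: the sum of the `p_i` whose
target lies in `C`. -/
def collProb (C : Set (Proc Chan)) {n : ℕ} (ps : Fin n → ℝ) (Ts : Fin n → Tm Chan) : ℝ :=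
  ∑ i, if inC C (Ts i) then ps i else 0

/-- A `q`-transition `A ⇝_E →^q C`: a regular ε-tree of `A` with regard to `E`
such that every leaf has a collective silent transition whose weighted
probability `P_E(L → C) = P(L → C)/(1 − P(L → [A]_E))` of reaching `C` is `q`. -/
def QTrans (E : Proc Chan → Proc Chan → Prop) (A : Proc Chan) (q : ℝ)
    (C : Set (Proc Chan)) : Prop :=
  ∃ t, IsETree E A t ∧ t.Regular ∧
    ∀ σ L p, t.node σ = some (L, p) → ¬ t.hasNode (0 :: σ) →
      ∃ (n : ℕ) (ps : Fin n → ℝ) (Ts : Fin n → Tm Chan), CStep L.val n ps Ts ∧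
        collProb C ps Ts / (1 - collProb (classOf E A) ps Ts) = q

/-- `E` is a branching bisimulation on `P_RCCS`: an equivalence such that
(1) ℓ-transitions with `ℓ ≠ τ ∨ C ≠ [A]_E` are bisimulated by all members of
`[A]_E`, and (2) likewise for `q`-transitions with `q ∈ (0,1]` and `C ≠ [A]_E`. -/
def IsBB (E : Proc Chan → Proc Chan → Prop) : Prop :=
  Equivalence E ∧
  (∀ A B l C, l.IsAct → IsClass E C → E A B → (l ≠ Lab.tau 1 ∨ C ≠ classOf E A) →
    LTrans E A l C → LTrans E B l C) ∧
  (∀ A B q C, 0 < q → q ≤ 1 → IsClass E C → E A B → C ≠ classOf E A →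
    QTrans E A q C → QTrans E B q C)

/-- `E` is a codivergent branching bisimulation on `P_RCCS`. -/
def IsCBB (E : Proc Chan → Proc Chan → Prop) : Prop := IsBB E ∧ Codivergent E

/-- `=_RCCS`, the largest codivergent branching bisimulation: the union of all
codivergent branching bisimulations. -/
def RccsEq (A B : Proc Chan) : Prop := ∃ E, IsCBB E ∧ E A B

/-! ### CCS -/

/-- The set `P_CCS` of CCS processes: closed well-formed terms with no random
choice, viewed inside RCCS. -/
def CProc (Chan : Type) : Type := {T : Tm Chan // T.ClosedAt 0 ∧ T.WF ∧ T.NoRand}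

/-- A CCS process is an RCCS process. -/
def CProc.toProc (A : CProc Chan) : Proc Chan := ⟨A.val, A.prop.1, A.prop.2.1⟩

/-- `A →^τ_E A'`: a state-preserving silent transition. -/
def TauE (E : CProc Chan → CProc Chan → Prop) (A A' : CProc Chan) : Prop :=
  Step A.val (.tau 1) A'.val ∧ E A A'

/-- `A` is `E`-divergent: there is an infinite sequence of state-preserving
silent transitions from `A`. -/
def CDivergent (E : CProc Chan → CProc Chan → Prop) (A : CProc Chan) : Prop :=
  ∃ f : ℕ → CProc Chan, f 0 = A ∧ ∀ n, TauE E (f n) (f (n + 1))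

/-- An equivalence on `P_CCS` is codivergent if each class consists either
only of `E`-divergent processes or only of non-`E`-divergent ones. -/
def CCodivergent (E : CProc Chan → CProc Chan → Prop) : Prop :=
  ∀ A B, E A B → (CDivergent E A ↔ CDivergent E B)

/-- The `E`-class of a CCS process. -/
def cclassOf (E : CProc Chan → CProc Chan → Prop) (A : CProc Chan) : Set (CProc Chan) :=
  {B | E A B}

/-- `C` is an `E`-class. -/
def CIsClass (E : CProc Chan → CProc Chan → Prop) (C : Set (CProc Chan)) : Prop :=
  ∃ A, C = cclassOf E A

/-- `A ⇒_E →^ℓ C`: finitely many state-preserving silent transitions followed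
by an `ℓ`-transition into the class `C`. -/
def CWeakTo (E : CProc Chan → CProc Chan → Prop) (A : CProc Chan) (l : Lab Chan)
    (C : Set (CProc Chan)) : Prop :=
  ∃ A', Relation.ReflTransGen (TauE E) A A' ∧ ∃ A'' ∈ C, Step A'.val l A''.val

/-- `E` is a branching bisimulation on `P_CCS`. -/
def CIsBB (E : CProc Chan → CProc Chan → Prop) : Prop :=
  Equivalence E ∧
  ∀ A B l C, Lab.IsAct l → CIsClass E C → E A B → (l ≠ Lab.tau 1 ∨ C ≠ cclassOf E A) →
    CWeakTo E A l C → CWeakTo E B l C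

/-- `E` is a codivergent branching bisimulation on `P_CCS`. -/
def CIsCBB (E : CProc Chan → CProc Chan → Prop) : Prop := CIsBB E ∧ CCodivergent E

/-- `=_CCS`, the largest codivergent branching bisimulation on `P_CCS`. -/
def CcsEq (A B : CProc Chan) : Prop := ∃ E, CIsCBB E ∧ E A B

/-!
A CCS process performs no random choice, and neither does any process reachable from it. Hence
an ε-tree of a CCS process is a single path of `τ`-transitions inside one equivalence class: it is
regular iff the path is finite and divergent iff the path is infinite. So `⇝_E →^ℓ` coincides with
`⇒_E →^ℓ`, divergent ε-trees coincide with `E`-divergence, and `q`-transitions do not exist.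
Therefore restricting a relation on `P_RCCS` to `P_CCS`, and extending a relation on `P_CCS` to
`P_RCCS` by equality, both preserve codivergent branching bisimulations.
-/

open Relation Function

section Relations

variable {α β : Type*}

theorem reflTransGen_iff_exists_path {r : α → α → Prop} {a b : α} :
    ReflTransGen r a b ↔
      ∃ (f : ℕ → α) (n : ℕ), f 0 = a ∧ f n = b ∧ ∀ k < n, r (f k) (f (k + 1)) := by
  constructor
  · intro h
    induction h using ReflTransGen.head_induction_on with
    | refl => exact ⟨fun _ ↦ b, 0, rfl, rfl, by simp⟩
    | @head a c hac _ ih =>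
      obtain ⟨f, n, rfl, rfl, hf⟩ := ih
      refine ⟨fun k ↦ k.casesOn a f, n + 1, rfl, rfl, fun k hk ↦ ?_⟩
      cases k with
      | zero => exact hac
      | succ k => exact hf k (by lia)
  · rintro ⟨f, n, rfl, rfl, hf⟩
    have hpath : ReflTransGen (r on f) 0 n :=
      reflTransGen_of_succ_of_le _ (fun k hk ↦ hf k hk.2) (Nat.zero_le n)
    exact hpath.lift f fun _ _ h ↦ h

theorem exists_forall_iff_le_enat {p : ℕ → Prop} (h0 : p 0) (hp : ∀ k, p (k + 1) → p k) :
    ∃ N : ℕ∞, ∀ k : ℕ, p k ↔ (k : ℕ∞) ≤ N := by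
  have hlower : IsLowerSet {k | p k} := fun _ _ hmk hk ↦
    Nat.decreasingInduction (fun j _ ↦ hp j) hk hmk
  obtain h | ⟨n, h⟩ := hlower.eq_univ_or_Iio <;> simp only [Set.ext_iff] at h
  · exact ⟨⊤, fun k ↦ by simpa using h k⟩
  · cases n with
    | zero => exact absurd ((h 0).1 h0) (by simp)
    | succ n => exact ⟨n, fun k ↦ by simpa [Nat.lt_succ_iff] using h k⟩

/-- The extension of a relation on `α` along `f : α → β` by equality: `x` and `y` are related if
they are equal or images of related elements. It turns a relation on `P_CCS` into one on `P_RCCS`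
that leaves all properly random processes unidentified. -/
def ReflMap (r : α → α → Prop) (f : α → β) : β → β → Prop :=
  ReflGen (Relation.Map r f f)

variable {r : α → α → Prop} {f : α → β}

theorem equivalence_reflMap (hr : Equivalence r) (hf : Injective f) :
    Equivalence (ReflMap r f) where
  refl _ := .refl
  symm := by
    rintro _ _ (_ | ⟨a, b, hab, rfl, rfl⟩)
    · exact .refl
    · exact .single ⟨b, a, hr.symm hab, rfl, rfl⟩
  trans := by
    rintro _ _ _ (_ | ⟨a, b, hab, rfl, rfl⟩) hbc
    · exact hbc
    · obtain _ | ⟨b', c, hbc, hb, rfl⟩ := hbc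
      · exact .single ⟨a, b, hab, rfl, rfl⟩
      · obtain rfl := hf hb
        exact .single ⟨a, c, hr.trans hab hbc, rfl, rfl⟩

theorem onFun_reflMap (hr : ∀ a, r a a) (hf : Injective f) : (ReflMap r f on f) = r := by
  ext a b
  rw [onFun_apply, ReflMap, reflGen_iff, map_apply_apply hf hf, hf.eq_iff]
  exact or_iff_right_of_imp (by rintro rfl; exact hr _)

end Relations

section NoRand

variable {T T' : Tm Chan} {l : Lab Chan}

theorem Tm.NoRand.lift (hT : T.NoRand) (c : ℕ) : (Tm.lift c T).NoRand := by
  induction T generalizing c with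
  | var => trivial
  | sum _ _ _ ih => exact fun i ↦ ih i (hT i) c
  | rand => exact hT
  | par _ _ ihS ihT => exact ⟨ihS hT.1 c, ihT hT.2 c⟩
  | loc _ _ ih => exact ih hT c
  | fix _ ih => exact ih hT (c + 1)

theorem Tm.NoRand.inst {S : Tm Chan} (hT : T.NoRand) (hS : S.NoRand) (c : ℕ) :
    (Tm.inst c S T).NoRand := by
  induction T generalizing c S with
  | var n =>
    simp only [Tm.inst]
    split_ifs
    exacts [trivial, hS, trivial]
  | sum _ _ _ ih => exact fun i ↦ ih i (hT i) hS c
  | rand => exact hT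
  | par _ _ ihS ihT => exact ⟨ihS hT.1 hS c, ihT hT.2 hS c⟩
  | loc _ _ ih => exact ih hT hS c
  | fix _ ih => exact ih hT (hS.lift 0) (c + 1)

theorem Tm.NoRand.inst_fix (hT : (Tm.fix T).NoRand) : (Tm.inst 0 (.fix T) T).NoRand :=
  Tm.NoRand.inst (T := T) hT hT 0

theorem Step.noRand (h : Step T l T') (hT : T.NoRand) : T'.NoRand := by
  induction h with
  | sum i => exact hT i
  | rand => exact hT.elim
  | comL _ _ ihS ihT => exact ⟨ihS hT.1, ihT hT.2⟩
  | comR _ _ ihS ihT => exact ⟨ihS hT.1, ihT hT.2⟩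
  | parL _ ih => exact ⟨ih hT.1, hT.2⟩
  | parR _ ih => exact ⟨hT.1, ih hT.2⟩
  | loc _ _ _ _ ih => exact ih hT
  | fix _ ih => exact ih hT.inst_fix

theorem CStep.not_noRand {n : ℕ} {p : Fin n → ℝ} {Ts : Fin n → Tm Chan} (h : CStep T n p Ts) :
    ¬ T.NoRand := by
  intro hT
  induction h with
  | rand => exact hT
  | parL _ ih => exact ih hT.1
  | parR _ ih => exact ih hT.2
  | loc _ _ ih => exact ih hT
  | fix _ ih => exact ih hT.inst_fix

theorem CProc.toProc_injective : Injective (CProc.toProc (Chan := Chan)) := fun _ _ h ↦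
  Subtype.ext (congrArg (Subtype.val : Proc Chan → Tm Chan) h)

theorem Step.exists_toProc_eq {A : CProc Chan} {P : Proc Chan} (h : Step A.val l P.val) :
    ∃ B : CProc Chan, B.toProc = P :=
  ⟨⟨P.val, P.prop.1, P.prop.2, h.noRand A.prop.2.2⟩, rfl⟩

end NoRand

attribute [ext] PTree

theorem PTree.hasNode_iff {t : PTree Chan} {σ : List ℕ} :
    t.hasNode σ ↔ ∃ P p, t.node σ = some (P, p) := by
  simp [PTree.hasNode, Option.isSome_iff_exists]

/-- The silent tree that is the single path `f 0, f 1, …` of length `N`, which is infinite if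
`N = ⊤`. Values of `f` beyond `N` are ignored. -/
def pathTree (f : ℕ → Proc Chan) (N : ℕ∞) : PTree Chan where
  node σ := if (∀ i ∈ σ, i = 0) ∧ σ.length ≤ N then some (f σ.length, 1) else none

section PathTree

variable {f : ℕ → Proc Chan} {N : ℕ∞} {n : ℕ} {σ : List ℕ}

theorem pathTree_node_eq_some_iff {P : Proc Chan} {p : ℝ} :
    (pathTree f N).node σ = some (P, p) ↔
      ((∀ i ∈ σ, i = 0) ∧ σ.length ≤ N) ∧ f σ.length = P ∧ 1 = p := by
  simp [pathTree]

theorem hasNode_pathTree_iff :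
    (pathTree f N).hasNode σ ↔ (∀ i ∈ σ, i = 0) ∧ σ.length ≤ N := by
  simp [PTree.hasNode, pathTree]

theorem hasNode_pathTree_cons_iff {i : ℕ} :
    (pathTree f N).hasNode (i :: σ) ↔ i = 0 ∧ (∀ j ∈ σ, j = 0) ∧ σ.length < N := by
  simp [hasNode_pathTree_iff, and_assoc, ENat.add_one_le_iff]

theorem isLeaf_pathTree_iff :
    (pathTree f N).IsLeaf σ ↔ (∀ i ∈ σ, i = 0) ∧ σ.length = N := by
  rw [PTree.IsLeaf, hasNode_pathTree_iff, hasNode_pathTree_cons_iff, le_antisymm_iff (b := N)]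
  grind

theorem isLeaf_pathTree_coe_iff :
    (pathTree f n).IsLeaf σ ↔ σ = List.replicate n 0 := by
  rw [isLeaf_pathTree_iff, List.eq_replicate_iff, Nat.cast_inj, and_comm]

theorem not_isLeaf_pathTree_top : ¬ (pathTree f ⊤).IsLeaf σ := by
  simp [isLeaf_pathTree_iff]

theorem pathProb_pathTree (hσ : (pathTree f N).hasNode σ) : (pathTree f N).pathProb σ = 1 := by
  induction σ with
  | nil => rfl
  | cons i σ ih =>
    obtain ⟨rfl, hzero, hlt⟩ := hasNode_pathTree_cons_iff.1 hσ
    rw [PTree.pathProb, ih (hasNode_pathTree_iff.2 ⟨hzero, hlt.le⟩), mul_one, PTree.edgeProb,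
      pathTree_node_eq_some_iff.2 ⟨hasNode_pathTree_iff.1 hσ, rfl, rfl⟩]
    rfl

theorem regular_pathTree_coe : (pathTree f n).Regular := by
  refine tendsto_atTop_of_eventually_const (i₀ := n) fun k hk ↦ ?_
  have hleaf (σ) := isLeaf_pathTree_coe_iff (f := f) (n := n) (σ := σ)
  rw [PTree.finBranchProb, tsum_eq_single (List.replicate n 0) (by simp +contextual [hleaf]),
    if_pos (by simpa [hleaf] using hk)]
  exact pathProb_pathTree ((hleaf _).2 rfl).1

theorem divergent_pathTree_top : (pathTree f ⊤).Divergent :=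
  tendsto_const_nhds.congr fun k ↦ by simp [PTree.finBranchProb, not_isLeaf_pathTree_top]

theorem regular_pathTree_iff : (pathTree f N).Regular ↔ ∃ n : ℕ, N = n := by
  refine ⟨fun h ↦ ?_, ?_⟩
  · cases N with
    | top => exact absurd (tendsto_nhds_unique h divergent_pathTree_top) one_ne_zero
    | coe n => exact ⟨n, rfl⟩
  · rintro ⟨n, rfl⟩
    exact regular_pathTree_coe

theorem divergent_pathTree_iff : (pathTree f N).Divergent ↔ N = ⊤ := by
  refine ⟨fun h ↦ ?_, ?_⟩
  · cases N with
    | top => rfl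
    | coe n => exact absurd (tendsto_nhds_unique regular_pathTree_coe h) one_ne_zero
  · rintro rfl
    exact divergent_pathTree_top

theorem forall_leaf_pathTree_coe_iff {φ : Proc Chan → Prop} :
    (∀ σ L p, (pathTree f n).node σ = some (L, p) → ¬ (pathTree f n).hasNode (0 :: σ) → φ L) ↔
      φ (f n) := by
  have hleaf (σ) := isLeaf_pathTree_coe_iff (f := f) (n := n) (σ := σ)
  constructor
  · intro h
    have hend := (hleaf _).2 rfl
    refine h (List.replicate n 0) (f n) 1 ?_ hend.2
    simp [pathTree]
  · intro h σ L p hL hσ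
    obtain rfl := (hleaf σ).1 ⟨PTree.hasNode_iff.2 ⟨L, p, hL⟩, hσ⟩
    obtain ⟨-, rfl, -⟩ := pathTree_node_eq_some_iff.1 hL
    simpa using h

end PathTree

theorem isETree_pathTree {E : Proc Chan → Proc Chan → Prop} (hE : Equivalence E)
    {f : ℕ → Proc Chan} {N : ℕ∞}
    (hf : ∀ k : ℕ, k < N → Step (f k).val (.tau 1) (f (k + 1)).val ∧ E (f k) (f (k + 1))) :
    IsETree E (f 0) (pathTree f N) := by
  have hclass (k : ℕ) (hk : k ≤ N) : E (f 0) (f k) := by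
    induction k with
    | zero => exact hE.refl _
    | succ k ih =>
      have hk' : (k : ℕ∞) < N := by simpa [ENat.add_one_le_iff] using hk
      exact hE.trans (ih hk'.le) (hf k hk').2
  have hedge {σ i P p Q q} (hP : (pathTree f N).node σ = some (P, p))
      (hQ : (pathTree f N).node (i :: σ) = some (Q, q)) :
      i = 0 ∧ 1 = q ∧ Step P.val (.tau 1) Q.val := by
    obtain ⟨-, rfl, -⟩ := pathTree_node_eq_some_iff.1 hP
    obtain ⟨-, rfl, rfl⟩ := pathTree_node_eq_some_iff.1 hQ
    obtain ⟨rfl, -, hσ⟩ := hasNode_pathTree_cons_iff.1 (PTree.hasNode_iff.2 ⟨_, _, hQ⟩)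
    exact ⟨rfl, rfl, (hf _ hσ).1⟩
  refine ⟨⟨by simp [pathTree], ?_, ?_, ?_, ?_⟩, ?_, ?_, ?_⟩
  · intro i σ h
    obtain ⟨-, hσ, hlt⟩ := hasNode_pathTree_cons_iff.1 h
    exact hasNode_pathTree_iff.2 ⟨hσ, hlt.le⟩
  · intro i j σ hji h
    obtain rfl : j = i := by have := (hasNode_pathTree_cons_iff.1 h).1; lia
    exact h
  · exact fun σ ↦ ⟨1, fun i hi h ↦ by have := (hasNode_pathTree_cons_iff.1 h).1; lia⟩
  · intro σ i P p Q q hP hQ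
    obtain ⟨-, rfl, hstep⟩ := hedge hP hQ
    exact ⟨one_pos, le_rfl, hstep⟩
  · intro σ P p hP
    obtain ⟨⟨-, hσ⟩, rfl, -⟩ := pathTree_node_eq_some_iff.1 hP
    exact hclass _ hσ
  · intro σ i P p Q q hP hQ hq
    exact absurd (hedge hP hQ).2.1 hq.ne'
  · intro σ i P p Q hP hQ
    obtain ⟨hi, -, hstep⟩ := hedge hP hQ
    exact ⟨hstep, hi, by simp [hasNode_pathTree_cons_iff]⟩

theorem isETree_pathTree_iff {E : Proc Chan → Proc Chan → Prop} (hE : Equivalence E)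
    {P : Proc Chan} {f : ℕ → Proc Chan} {N : ℕ∞} :
    IsETree E P (pathTree f N) ↔ f 0 = P ∧
      ∀ k : ℕ, k < N → Step (f k).val (.tau 1) (f (k + 1)).val ∧ E (f k) (f (k + 1)) := by
  refine ⟨fun ht ↦ ?_, fun ⟨h0, hf⟩ ↦ h0 ▸ isETree_pathTree hE hf⟩
  obtain ⟨⟨hroot, -, -, -, hedge⟩, hclass, -⟩ := ht
  have hnode (k : ℕ) (hk : k ≤ N) :
      (pathTree f N).node (List.replicate k 0) = some (f k, 1) := by
    simp [pathTree, hk]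
  refine ⟨by simpa [pathTree] using hroot, fun k hk ↦ ?_⟩
  have hk₀ := hnode k hk.le
  have hk₁ := hnode (k + 1) (by simpa [ENat.add_one_le_iff] using hk)
  exact ⟨(hedge _ _ _ _ _ _ hk₀ hk₁).2.2,
    hE.trans (hE.symm (hclass _ _ _ hk₀)) (hclass _ _ _ hk₁)⟩

theorem IsETree.step_of_noRand {E : Proc Chan → Proc Chan → Prop} {P Q R : Proc Chan}
    {t : PTree Chan} {σ : List ℕ} {i : ℕ} {p q : ℝ} (ht : IsETree E P t)
    (hQ : t.node σ = some (Q, p)) (hR : t.node (i :: σ) = some (R, q)) (hQr : Q.val.NoRand) :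
    i = 0 ∧ q = 1 ∧ Step Q.val (.tau 1) R.val := by
  obtain ⟨⟨-, -, -, -, hedge⟩, -, hrand, htau⟩ := ht
  obtain ⟨-, hq, -⟩ := hedge σ i Q p R q hQ hR
  obtain hq | rfl := hq.lt_or_eq
  · obtain ⟨n, ps, Ts, hstep, -⟩ := hrand σ i Q p R q hQ hR hq
    exact absurd hQr hstep.not_noRand
  · obtain ⟨hstep, hi, -⟩ := htau σ i Q p R hQ hR
    exact ⟨hi, rfl, hstep⟩

section CCS

variable {E : Proc Chan → Proc Chan → Prop} {A : CProc Chan} {t : PTree Chan}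

theorem IsETree.exists_node_eq_toProc (ht : IsETree E A.toProc t) {σ : List ℕ}
    (hσ : t.hasNode σ) :
    (∀ i ∈ σ, i = 0) ∧ ∃ B : CProc Chan, t.node σ = some (B.toProc, 1) := by
  induction σ with
  | nil => exact ⟨by simp, A, ht.1.1⟩
  | cons i σ ih =>
    have ⟨⟨_, hparent, _⟩, _⟩ := ht
    obtain ⟨hzero, B, hB⟩ := ih (hparent i σ hσ)
    obtain ⟨P, p, hP⟩ := PTree.hasNode_iff.1 hσ
    obtain ⟨rfl, rfl, hstep⟩ := ht.step_of_noRand hB hP B.prop.2.2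
    obtain ⟨C, rfl⟩ := Step.exists_toProc_eq hstep
    exact ⟨by simpa using hzero, C, hP⟩

theorem IsETree.exists_eq_pathTree (ht : IsETree E A.toProc t) :
    ∃ (f : ℕ → CProc Chan) (N : ℕ∞), t = pathTree (CProc.toProc ∘ f) N := by
  have ⟨⟨hroot, hparent, _⟩, _⟩ := ht
  obtain ⟨N, hN⟩ := exists_forall_iff_le_enat (p := fun k ↦ t.hasNode (List.replicate k 0))
    (PTree.hasNode_iff.2 ⟨_, _, hroot⟩) fun k ↦ hparent 0 (List.replicate k 0)
  have hlabel (k : ℕ) : ∃ B : CProc Chan,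
      k ≤ N → t.node (List.replicate k 0) = some (B.toProc, 1) := by
    by_cases hk : k ≤ N
    · obtain ⟨-, B, hB⟩ := ht.exists_node_eq_toProc ((hN k).2 hk)
      exact ⟨B, fun _ ↦ hB⟩
    · exact ⟨A, fun h ↦ absurd h hk⟩
  choose f hf using hlabel
  refine ⟨f, N, PTree.ext (funext fun σ ↦ ?_)⟩
  by_cases hzero : ∀ i ∈ σ, i = 0
  · rw [List.eq_replicate_length.2 hzero]
    by_cases hσ : σ.length ≤ N
    · simp [pathTree, hf, hσ]
    · simpa [pathTree, hσ] using Option.not_isSome_iff_eq_none.1 ((hN σ.length).not.2 hσ)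
  · have hσ : ¬ t.hasNode σ := fun h ↦ hzero (ht.exists_node_eq_toProc h).1
    simpa [pathTree, hzero] using Option.not_isSome_iff_eq_none.1 hσ

theorem exists_regular_isETree_toProc_iff (hE : Equivalence E) {φ : Proc Chan → Prop} :
    (∃ t, IsETree E A.toProc t ∧ t.Regular ∧
        ∀ σ L p, t.node σ = some (L, p) → ¬ t.hasNode (0 :: σ) → φ L) ↔
      ∃ A', ReflTransGen (TauE (E on CProc.toProc)) A A' ∧ φ A'.toProc := by
  constructor
  · rintro ⟨t, ht, hreg, hleaf⟩
    obtain ⟨f, N, rfl⟩ := ht.exists_eq_pathTree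
    obtain ⟨h0, hf⟩ := (isETree_pathTree_iff hE).1 ht
    obtain ⟨n, rfl⟩ := regular_pathTree_iff.1 hreg
    refine ⟨f n, reflTransGen_iff_exists_path.2
      ⟨f, n, CProc.toProc_injective h0, rfl, fun k hk ↦ ?_⟩,
      forall_leaf_pathTree_coe_iff.1 hleaf⟩
    exact hf k (by exact_mod_cast hk)
  · rintro ⟨A', hpath, hA'⟩
    obtain ⟨f, n, rfl, rfl, hf⟩ := reflTransGen_iff_exists_path.1 hpath
    exact ⟨pathTree (CProc.toProc ∘ f) n,
      isETree_pathTree hE fun k hk ↦ hf k (by exact_mod_cast hk),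
      regular_pathTree_coe, forall_leaf_pathTree_coe_iff.2 hA'⟩

theorem exists_divergent_isETree_toProc_iff (hE : Equivalence E) :
    (∃ t, IsETree E A.toProc t ∧ t.Divergent) ↔ CDivergent (E on CProc.toProc) A := by
  constructor
  · rintro ⟨t, ht, hdiv⟩
    obtain ⟨f, N, rfl⟩ := ht.exists_eq_pathTree
    obtain ⟨h0, hf⟩ := (isETree_pathTree_iff hE).1 ht
    obtain rfl := divergent_pathTree_iff.1 hdiv
    exact ⟨f, CProc.toProc_injective h0, fun k ↦ hf k (by simp)⟩
  · rintro ⟨f, rfl, hf⟩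
    exact ⟨pathTree (CProc.toProc ∘ f) ⊤, isETree_pathTree hE fun k _ ↦ hf k,
      divergent_pathTree_top⟩

theorem lTrans_toProc_iff (hE : Equivalence E) {l : Lab Chan} {C : Set (Proc Chan)} :
    LTrans E A.toProc l C ↔ CWeakTo (E on CProc.toProc) A l (CProc.toProc ⁻¹' C) := by
  refine (exists_regular_isETree_toProc_iff hE (φ := fun L ↦ ∃ L' ∈ C, Step L.val l L'.val)).trans
    (exists_congr fun A' ↦ and_congr_right fun _ ↦ ⟨?_, ?_⟩)
  · rintro ⟨L', hL', hstep⟩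
    obtain ⟨B, rfl⟩ := Step.exists_toProc_eq (A := A') hstep
    exact ⟨B, hL', hstep⟩
  · rintro ⟨B, hB, hstep⟩
    exact ⟨B.toProc, hB, hstep⟩

theorem not_qTrans_toProc (hE : Equivalence E) {q : ℝ} {C : Set (Proc Chan)} :
    ¬ QTrans E A.toProc q C := by
  intro h
  obtain ⟨A', -, n, ps, Ts, hstep, -⟩ := (exists_regular_isETree_toProc_iff hE).1 h
  exact hstep.not_noRand A'.prop.2.2

theorem IsClass.eq_classOf (hE : Equivalence E) {C : Set (Proc Chan)} (hC : IsClass E C)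
    {P : Proc Chan} (hP : P ∈ C) : C = classOf E P := by
  obtain ⟨Q, rfl⟩ := hC
  ext R
  exact ⟨hE.trans (hE.symm hP), hE.trans hP⟩

theorem IsCBB.onFun_toProc (h : IsCBB E) : CIsCBB (E on CProc.toProc) := by
  obtain ⟨⟨hE, hltrans, -⟩, hdiv⟩ := h
  refine ⟨⟨hE.comap _, ?_⟩, fun A B hAB ↦ ?_⟩
  · rintro A B l _ hl ⟨D, rfl⟩ hAB hne hA
    have hne' : l ≠ .tau 1 ∨ classOf E D.toProc ≠ classOf E A.toProc :=
      hne.imp_right (mt (congrArg (CProc.toProc ⁻¹' ·)))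
    exact (lTrans_toProc_iff hE).1
      (hltrans _ _ l _ hl ⟨_, rfl⟩ hAB hne' ((lTrans_toProc_iff hE).2 hA))
  · rw [← exists_divergent_isETree_toProc_iff hE, ← exists_divergent_isETree_toProc_iff hE]
    exact hdiv _ _ hAB

end CCS

theorem CIsCBB.reflMap_toProc {E : CProc Chan → CProc Chan → Prop} (h : CIsCBB E) :
    IsCBB (ReflMap E CProc.toProc) := by
  obtain ⟨⟨hE, hweak⟩, hdiv⟩ := h
  have hR := equivalence_reflMap hE CProc.toProc_injective
  have hRE : (ReflMap E CProc.toProc on CProc.toProc) = E :=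
    onFun_reflMap hE.refl CProc.toProc_injective
  refine ⟨⟨hR, ?_, ?_⟩, ?_⟩
  · rintro _ _ l C hl hC (_ | ⟨A, B, hAB, rfl, rfl⟩) hne hA
    · exact hA
    · rw [lTrans_toProc_iff hR, hRE] at hA ⊢
      obtain ⟨A', hpath, L, hL, hstep⟩ := hA
      obtain rfl := hC.eq_classOf hR hL
      have hpre (D : CProc Chan) :
          CProc.toProc ⁻¹' classOf (ReflMap E CProc.toProc) D.toProc = cclassOf E D :=
        congrArg (cclassOf · D) hRE
      rw [hpre] at hL ⊢
      refine hweak A B l _ hl ⟨L, rfl⟩ hAB (hne.imp_right (mt fun hLA ↦ ?_))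
        ⟨A', hpath, L, hL, hstep⟩
      have hAL : L ∈ cclassOf E A := hLA ▸ hL
      exact (IsClass.eq_classOf hR ⟨_, rfl⟩ (.single ⟨A, L, hAL, rfl, rfl⟩)).symm
  · rintro _ _ q C _ _ _ (_ | ⟨A, B, -, rfl, rfl⟩) _ hA
    · exact hA
    · exact absurd hA (not_qTrans_toProc hR)
  · rintro _ _ (_ | ⟨A, B, hAB, rfl, rfl⟩)
    · exact Iff.rfl
    · rw [exists_divergent_isETree_toProc_iff hR, exists_divergent_isETree_toProc_iff hR, hRE]
      exact hdiv A B hAB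

/-- `=_RCCS` is a conservative extension of `=_CCS`: for all
CCS processes `A` and `B` (viewed as RCCS processes), `A =_CCS B` iff
`A =_RCCS B`. -/
theorem rccsEq_conservative {Chan : Type} (A B : CProc Chan) :
    CcsEq A B ↔ RccsEq A.toProc B.toProc := by
  constructor
  · rintro ⟨E, hE, hAB⟩
    exact ⟨ReflMap E CProc.toProc, hE.reflMap_toProc, .single ⟨A, B, hAB, rfl, rfl⟩⟩
  · rintro ⟨E, hE, hAB⟩
    exact ⟨E on CProc.toProc, hE.onFun_toProc, hAB⟩
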